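/- If f : V* → ℝ has finite energy, i.e. sup_{n≥0} 𝓔_n(f,f) < ∞, then lim_{n→∞} max_{x∈V_n} (5/3)^n Σ_{y : {x,y}∈E_n} (f(y)−f(x))² = 0; that is, the pointwise local energies of a finite-energy function vanish uniformly as n → ∞. -/

import Mathlib

open Set MeasureTheory Filter Topology
open scoped Classical ENNReal NNReal BoundedContinuousFunction

noncomputable section

/-- The plane, with the Euclidean norm. -/
abbrev Pt : Type := EuclideanSpace ℝ (Fin 2)

/-- The three vertexes of the initial equilateral triangle. -/
def ptA : Fin 3 → Pt
  | 0 => (WithLp.equiv 2 (Fin 2 → ℝ)).symm ![0, 0]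
  | 1 => (WithLp.equiv 2 (Fin 2 → ℝ)).symm ![1, 0]
  | 2 => (WithLp.equiv 2 (Fin 2 → ℝ)).symm ![1 / 2, Real.sqrt 3 / 2]

/-- The contraction `fᵢ(z) = (z + aᵢ)/2`. -/
def sgMap (i : Fin 3) (z : Pt) : Pt := (2 : ℝ)⁻¹ • (z + ptA i)

/-- The vertex sets `V_n`. -/
def Vn : ℕ → Finset Pt
  | 0 => {ptA 0, ptA 1, ptA 2}
  | n + 1 => (Vn n).image (sgMap 0) ∪ (Vn n).image (sgMap 1) ∪ (Vn n).image (sgMap 2)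

/-- `V* = ⋃ₙ Vₙ`. -/
def Vstar : Set Pt := ⋃ n, (Vn n : Set Pt)

/-- The Sierpinski gasket `V`, the closure of `V*`. -/
def sg : Set Pt := closure Vstar

lemma Vstar_subset_sg {x : Pt} (hx : x ∈ Vstar) : x ∈ sg :=
  subset_closure hx

lemma Vn_subset_sg {n : ℕ} {x : Pt} (hx : x ∈ Vn n) : x ∈ sg :=
  subset_closure (Set.mem_iUnion.mpr ⟨n, hx⟩)

/-- `{x,y}` is an edge of the graph `Γₙ`. -/
def isEdge (n : ℕ) (x y : Pt) : Prop := ‖x - y‖ = (2 : ℝ) ^ (-(n : ℤ))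

/-- The discrete energy form `𝓔ₙ(u,v) = (5/3)ⁿ Σ_{{x,y}∈Eₙ} (u(y)-u(x))(v(y)-v(x))`;
the sum over unordered pairs is written as half the sum over ordered pairs. -/
def energyBi (n : ℕ) (u v : Pt → ℝ) : ℝ :=
  (5 / 3 : ℝ) ^ n * (1 / 2) *
    ∑ x ∈ Vn n, ∑ y ∈ Vn n, if isEdge n x y then (u y - u x) * (v y - v x) else 0

/-- The discrete energy `𝓔ₙ(u,u)`. -/
def energy (n : ℕ) (u : Pt → ℝ) : ℝ := energyBi n u u

/-- The discrete Laplacian `Δₙ g(x) = 5ⁿ Σ_{y:{x,y}∈Eₙ} (g(y)-g(x))`. -/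
def discLap (n : ℕ) (g : Pt → ℝ) (x : Pt) : ℝ :=
  (5 : ℝ) ^ n * ∑ y ∈ Vn n, if isEdge n x y then g y - g x else 0

/-- A function on `V*` has finite energy if `supₙ 𝓔ₙ(u,u) < ∞`. -/
def FiniteEnergy (u : Pt → ℝ) : Prop := BddAbove (Set.range fun n => energy n u)

/-- The empirical vertex measure `μₙ`, giving mass `3⁻ⁿ` to each point of `Vₙ`. -/
def empMeas (n : ℕ) : Measure Pt :=
  ((3 : ℝ≥0∞) ^ n)⁻¹ • ∑ x ∈ Vn n, Measure.dirac x

/-- Extension by zero of a continuous function on the gasket. -/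
def sgExt (f : C(sg, ℝ)) (x : Pt) : ℝ := if hx : x ∈ sg then f ⟨x, hx⟩ else 0

/-- `h(k)! = h(1)⋯h(k)`, with `h(0)! = 1`. -/
def hfact (h : ℕ → ℝ) (k : ℕ) : ℝ := ∏ i ∈ Finset.range k, h (i + 1)

/-- The partition function `Z(φ) = Σₖ φᵏ/h(k)!`. -/
def Zfun (h : ℕ → ℝ) (φ : ℝ) : ℝ := ∑' k, φ ^ k / hfact h k

/-- The one-site marginal `p_φ(k) = Z(φ)⁻¹ φᵏ/h(k)!`. -/
def pmarg (h : ℕ → ℝ) (φ : ℝ) (k : ℕ) : ℝ := (Zfun h φ)⁻¹ * φ ^ k / hfact h k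

/-- The mean of the one-site marginal `p_φ`. -/
def meanFun (h : ℕ → ℝ) (φ : ℝ) : ℝ := ∑' k : ℕ, (k : ℝ) * pmarg h φ k

/-- The zero-range generator on `Ωₙ = ℕ^{Vₙ}`, summing over ordered pairs `(x,y)`
with `{x,y} ∈ Eₙ`. -/
def zrGen (n : ℕ) (h : ℕ → ℝ) (F : (↥(Vn n) → ℕ) → ℝ) (η : ↥(Vn n) → ℕ) : ℝ :=
  ∑ x : ↥(Vn n), ∑ y : ↥(Vn n),
    if isEdge n x.1 y.1 then
      h (η x) * (F (Function.update (Function.update η x (η x - 1)) y (η y + 1)) - F η)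
    else 0

/-! Subdividing a triangle never lowers its renormalised energy, and the increase is the energy of
the deviation from the harmonic extension. The harmonic extension puts at most `3/5` of the energy
of a triangle into each of its three children, so the energy of a child is at most `4/5` of that of
its parent plus `4` times the increase of the total energy. For a function of finite energy these
increases have a finite sum, hence the largest cell energies of level `n` are summable over `n` and
in particular tend to `0`. Finally, a vertex has boundedly many neighbours, and two vertices at
distance `2⁻ⁿ` either belong to a common cell of level `n` or are opposite each other across a
hole, in which case both share a cell with a third vertex. -/

lemma sum_eq_of_pairwise_ne {M : Type*} [AddCommMonoid M] {i j k : Fin 3} (hij : i ≠ j)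
    (hik : i ≠ k) (hjk : j ≠ k) (g : Fin 3 → M) : ∑ l, g l = g i + g j + g k := by
  have huniv : (Finset.univ : Finset (Fin 3)) = {i, j, k} := by revert i j k; decide
  rw [huniv, Finset.sum_insert (by simp [hij, hik]), Finset.sum_pair hjk, add_assoc]

lemma exists_ne_and_ne (i j : Fin 3) : ∃ k, i ≠ k ∧ j ≠ k := by
  revert i j; decide

lemma abs_le_one_of_sq_le_two {a : ℤ} (h : a ^ 2 ≤ 2) : |a| ≤ 1 :=
  Int.lt_add_one_iff.1 (abs_lt_of_sq_lt_sq (by linarith : a ^ 2 < 2 ^ 2) two_pos.le)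

lemma summable_of_succ_le_mul_add_sub {b S : ℕ → ℝ} {r : ℝ} (hb : ∀ n, 0 ≤ b n) (hr : r < 1)
    (hS : BddAbove (Set.range S)) (h : ∀ n, b (n + 1) ≤ r * b n + (S (n + 1) - S n)) :
    Summable b := by
  obtain ⟨B, hB⟩ := hS
  have htelescope (n : ℕ) : (1 - r) * ∑ k ∈ Finset.range n, b k + b n ≤ b 0 + (S n - S 0) := by
    induction n with
    | zero => simp
    | succ n ih =>
      rw [Finset.sum_range_succ]
      linarith [h n]
  refine summable_of_sum_range_le (c := (b 0 + (B - S 0)) / (1 - r)) hb fun n => ?_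
  rw [le_div_iff₀' (sub_pos.2 hr)]
  linarith [htelescope n, hb n, hB ⟨n, rfl⟩]

lemma mem_Vn_zero {x : Pt} : x ∈ Vn 0 ↔ ∃ i, x = ptA i := by
  simp only [Vn, Finset.mem_insert, Finset.mem_singleton, Fin.exists_fin_succ, Fin.succ_zero_eq_one,
    Fin.succ_one_eq_two, IsEmpty.exists_iff, or_false]

lemma mem_Vn_succ {n : ℕ} {x : Pt} : x ∈ Vn (n + 1) ↔ ∃ i, ∃ z ∈ Vn n, x = sgMap i z := by
  simp [Vn, Fin.exists_fin_succ, eq_comm]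

lemma sgMap_ptA_self (i : Fin 3) : sgMap i (ptA i) = ptA i := by
  simp [sgMap, ← two_smul ℝ (ptA i), smul_smul]

lemma sgMap_ptA_comm (i j : Fin 3) : sgMap i (ptA j) = sgMap j (ptA i) := by
  simp [sgMap, add_comm]

lemma ptA_mem_Vn (n : ℕ) (i : Fin 3) : ptA i ∈ Vn n := by
  induction n with
  | zero => exact mem_Vn_zero.2 ⟨i, rfl⟩
  | succ n ih => exact mem_Vn_succ.2 ⟨i, _, ih, (sgMap_ptA_self i).symm⟩

lemma sgMap_injective (i : Fin 3) : Function.Injective (sgMap i) := fun x y h => by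
  simpa [sgMap] using h

lemma isEdge_sgMap {n : ℕ} {x y : Pt} (i : Fin 3) :
    isEdge (n + 1) (sgMap i x) (sgMap i y) ↔ isEdge n x y := by
  have hnorm : ‖sgMap i x - sgMap i y‖ = 2⁻¹ * ‖x - y‖ := by
    simp [sgMap, ← smul_sub, norm_smul]
  have hpow : (2 : ℝ) ^ (-((n + 1 : ℕ) : ℤ)) = 2⁻¹ * 2 ^ (-(n : ℤ)) := by
    rw [zpow_neg, zpow_neg, zpow_natCast, zpow_natCast, pow_succ', mul_inv]
  rw [isEdge, isEdge, hnorm, hpow, mul_right_inj' (by norm_num)]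

lemma isEdge.ne {n : ℕ} {x y : Pt} (h : isEdge n x y) : x ≠ y := by
  rintro rfl
  have hpos : (0 : ℝ) < 2 ^ (-(n : ℤ)) := by positivity
  rw [isEdge, sub_self, norm_zero] at h
  exact hpos.ne h

/-- Barycentric coordinates with respect to the triangle with vertices `ptA 0`, `ptA 1`, `ptA 2`. -/
def bary (z : Pt) : Fin 3 → ℝ :=
  ![1 - z 0 - z 1 / √3, z 0 - z 1 / √3, 2 * z 1 / √3]

lemma bary_ptA (i k : Fin 3) : bary (ptA i) k = if k = i then 1 else 0 := by
  have hsqrt : √3 / 2 / √3 = 1 / 2 := by field_simp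
  fin_cases i <;> fin_cases k <;> norm_num [bary, ptA, hsqrt, mul_div_assoc]

lemma sum_bary (z : Pt) : ∑ k, bary z k = 1 := by
  simp only [bary, Fin.sum_univ_three, Matrix.cons_val]
  ring

lemma bary_sgMap (i : Fin 3) (z : Pt) (k : Fin 3) :
    bary (sgMap i z) k = (bary z k + if k = i then 1 else 0) / 2 := by
  rw [← bary_ptA i k]
  fin_cases k <;>
    simp only [bary, sgMap, PiLp.add_apply, PiLp.smul_apply, smul_eq_mul, Fin.zero_eta, Fin.mk_one,
      Fin.reduceFinMk, Matrix.cons_val] <;> ring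

lemma bary_injective : Function.Injective bary := fun x y h => by
  have h1 : x 1 = y 1 := by simpa [bary] using congrFun h 2
  have h0 : x 0 = y 0 := by simpa [bary, h1] using congrFun h 1
  ext k
  fin_cases k
  exacts [h0, h1]

lemma sum_sq_bary_sub (x y : Pt) : ∑ k, (bary x k - bary y k) ^ 2 = 2 * ‖x - y‖ ^ 2 := by
  have h3 : √3 ^ 2 = 3 := Real.sq_sqrt (by norm_num)
  rw [EuclideanSpace.norm_sq_eq]
  simp only [Fin.sum_univ_three, Fin.sum_univ_two, bary, Matrix.cons_val, PiLp.sub_apply,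
    Real.norm_eq_abs, sq_abs]
  field_simp
  linear_combination -2 * (x 1 - y 1) ^ 2 * h3

lemma ptA_injective : Function.Injective ptA := fun i j h => by
  have := bary_ptA i j
  rw [h, bary_ptA] at this
  simpa [eq_comm] using this

lemma eq_of_bary_eq {x y : Pt} {i j : Fin 3} (hij : i ≠ j) (hi : bary x i = bary y i)
    (hj : bary x j = bary y j) : x = y := by
  refine bary_injective (funext fun k => ?_)
  obtain rfl | hik := eq_or_ne i k
  · exact hi
  obtain rfl | hjk := eq_or_ne j k
  · exact hj
  have hx := sum_bary x
  have hy := sum_bary y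
  rw [sum_eq_of_pairwise_ne hij hik hjk] at hx hy
  linarith

lemma isEdge_iff_sum_sq {n : ℕ} {x y : Pt} :
    isEdge n x y ↔ ∑ k, (2 ^ n * (bary x k - bary y k)) ^ 2 = 2 := by
  have hpow : (0 : ℝ) < 2 ^ n := by positivity
  have hsum : ∑ k, (2 ^ n * (bary x k - bary y k)) ^ 2 = 2 * (‖x - y‖ * 2 ^ n) ^ 2 := by
    simp only [mul_pow, ← Finset.mul_sum, sum_sq_bary_sub]
    ring
  rw [isEdge, zpow_neg, zpow_natCast, ← one_div, eq_div_iff hpow.ne', hsum,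
    ← pow_eq_one_iff_of_nonneg (by positivity) two_ne_zero]
  constructor <;> intro h <;> linarith

lemma exists_bary_eq_div {n : ℕ} {x : Pt} (hx : x ∈ Vn n) :
    ∃ m : Fin 3 → ℕ, ∑ k, m k = 2 ^ n ∧ ∀ k, bary x k = m k / 2 ^ n := by
  obtain ⟨m, hm⟩ : ∃ m : Fin 3 → ℕ, ∀ k, bary x k = m k / 2 ^ n := by
    induction n generalizing x with
    | zero =>
      obtain ⟨i, rfl⟩ := mem_Vn_zero.1 hx
      exact ⟨fun k => if k = i then 1 else 0, fun k => by simp [bary_ptA]⟩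
    | succ n ih =>
      obtain ⟨i, z, hz, rfl⟩ := mem_Vn_succ.1 hx
      obtain ⟨m, hm⟩ := ih hz
      refine ⟨fun k => m k + if k = i then 2 ^ n else 0, fun k => ?_⟩
      rw [bary_sgMap, hm k, pow_succ]
      push_cast
      split_ifs <;> field_simp
      rw [mul_zero]
  refine ⟨m, ?_, hm⟩
  have hsum : (∑ k, m k : ℝ) = 2 ^ n := by
    rw [← div_eq_one_iff_eq (by positivity), Finset.sum_div, ← sum_bary x]
    exact Finset.sum_congr rfl fun k _ => (hm k).symm
  exact_mod_cast hsum

lemma bary_mem_Icc {n : ℕ} {x : Pt} (hx : x ∈ Vn n) (k : Fin 3) : bary x k ∈ Set.Icc 0 1 := by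
  obtain ⟨m, hm_sum, hm⟩ := exists_bary_eq_div hx
  have hle : m k ≤ 2 ^ n := hm_sum ▸ Finset.single_le_sum (fun _ _ => zero_le) (Finset.mem_univ k)
  rw [hm k]
  exact ⟨by positivity, div_le_one_of_le₀ (by exact_mod_cast hle) (by positivity)⟩

lemma eq_ptA_of_sgMap_eq {n : ℕ} {x y : Pt} {i j : Fin 3} (hij : i ≠ j) (hx : x ∈ Vn n)
    (hy : y ∈ Vn n) (h : sgMap i x = sgMap j y) : x = ptA j := by
  have hbary (k : Fin 3) : bary x k + (if k = i then 1 else 0) =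
      bary y k + if k = j then 1 else 0 := by
    have := congrArg (bary · k) h
    simp only [bary_sgMap] at this
    linarith
  have hi : bary x i + 1 = bary y i := by simpa [hij] using hbary i
  have hj : bary x j = bary y j + 1 := by simpa [hij.symm] using hbary j
  refine eq_of_bary_eq hij ?_ ?_
  · rw [bary_ptA, if_neg hij]
    linarith [(bary_mem_Icc hx i).1, (bary_mem_Icc hy i).2]
  · rw [bary_ptA, if_pos rfl]
    linarith [(bary_mem_Icc hx j).2, (bary_mem_Icc hy j).1]

/-- `IsCellPair n x y` says that `x` and `y` are vertices, possibly equal, of a common cell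
`f_{w₁} ∘ ⋯ ∘ f_{wₙ}` of level `n`, the cells being generated by the outermost map first. -/
inductive IsCellPair : ℕ → Pt → Pt → Prop
  | zero (i j : Fin 3) : IsCellPair 0 (ptA i) (ptA j)
  | succ {n : ℕ} {x y : Pt} (i : Fin 3) :
      IsCellPair n x y → IsCellPair (n + 1) (sgMap i x) (sgMap i y)

lemma IsCellPair.symm {n : ℕ} {x y : Pt} (h : IsCellPair n x y) : IsCellPair n y x := by
  induction h with
  | zero i j => exact .zero j i
  | succ i _ ih => exact ih.succ i

lemma isCellPair_ptA_iterate (n : ℕ) (i k : Fin 3) :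
    IsCellPair n (ptA i) ((sgMap i)^[n] (ptA k)) := by
  induction n with
  | zero => exact .zero i k
  | succ n ih =>
    rw [Function.iterate_succ_apply']
    simpa only [sgMap_ptA_self] using ih.succ i

lemma bary_iterate_sgMap_ptA (n : ℕ) {i k : Fin 3} (hik : i ≠ k) :
    bary ((sgMap i)^[n] (ptA k)) i = 1 - (2 ^ n)⁻¹ ∧
      bary ((sgMap i)^[n] (ptA k)) k = (2 ^ n)⁻¹ := by
  induction n with
  | zero => simp [bary_ptA, hik]
  | succ n ih =>
    simp only [Function.iterate_succ_apply', bary_sgMap, ih, if_true, if_neg hik.symm, pow_succ]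
    constructor <;> ring

/-- For `N = 2ⁿ`, `s = N • bary x` and `t = N • bary y`, the hypothesis says that `sgMap i x` and
`sgMap j y` are adjacent in `Γₙ₊₁`. The last alternative is an edge across a hole. -/
lemma lattice_trichotomy {N si sj sk ti tj tk : ℕ} (hs : si + sj + sk = N) (ht : ti + tj + tk = N)
    (h : (si + N - ti : ℤ) ^ 2 + (sj - tj - N : ℤ) ^ 2 + (sk - tk : ℤ) ^ 2 = 2) :
    sj = N ∨ ti = N ∨ (sj + 1 = N ∧ sk = 1) ∧ ti + 1 = N ∧ tk = 1 := by
  have hi : |(si + N - ti : ℤ)| ≤ 1 := abs_le_one_of_sq_le_two (by nlinarith)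
  have hj : |(sj - tj - N : ℤ)| ≤ 1 := abs_le_one_of_sq_le_two (by nlinarith)
  rw [abs_le] at hi hj
  omega

lemma eq_ptA_or_eq_iterate_of_isEdge {n : ℕ} {x y : Pt} {i j k : Fin 3} (hij : i ≠ j) (hik : i ≠ k)
    (hjk : j ≠ k) (hx : x ∈ Vn n) (hy : y ∈ Vn n) (h : isEdge (n + 1) (sgMap i x) (sgMap j y)) :
    x = ptA j ∨ y = ptA i ∨ x = (sgMap j)^[n] (ptA k) ∧ y = (sgMap i)^[n] (ptA k) := by
  obtain ⟨s, hs_sum, hs⟩ := exists_bary_eq_div hx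
  obtain ⟨t, ht_sum, ht⟩ := exists_bary_eq_div hy
  rw [sum_eq_of_pairwise_ne hij hik hjk] at hs_sum ht_sum
  have hdiff (l : Fin 3) : 2 ^ (n + 1) * (bary (sgMap i x) l - bary (sgMap j y) l) =
      s l + (if l = i then 2 ^ n else 0) - t l - if l = j then 2 ^ n else 0 := by
    rw [bary_sgMap, bary_sgMap, hs, ht, pow_succ]
    split_ifs <;> field_simp <;> ring
  have hsq : (s i + 2 ^ n - t i : ℝ) ^ 2 + (s j - t j - 2 ^ n : ℝ) ^ 2 +
      (s k - t k : ℝ) ^ 2 = 2 := by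
    rw [isEdge_iff_sum_sq, sum_eq_of_pairwise_ne hij hik hjk, hdiff, hdiff, hdiff] at h
    simpa [hij, hij.symm, hik.symm, hjk.symm] using h
  have hpow : (2 : ℝ) ^ n ≠ 0 := by positivity
  rcases lattice_trichotomy hs_sum ht_sum (by exact_mod_cast hsq) with
    hsj | hti | ⟨⟨hsj, hsk⟩, hti, htk⟩
  · have hsi : s i = 0 := by omega
    refine .inl (eq_of_bary_eq hij ?_ ?_) <;> simp [hs, hsi, hsj, bary_ptA, hij, hpow]
  · have htj : t j = 0 := by omega
    refine .inr (.inl (eq_of_bary_eq hij ?_ ?_)) <;> simp [ht, hti, htj, bary_ptA, hij.symm, hpow]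
  · have hxj : bary x j = 1 - (2 ^ n)⁻¹ := by
      rw [hs, eq_sub_iff_add_eq, inv_eq_one_div, ← add_div, div_eq_one_iff_eq hpow]
      exact_mod_cast hsj
    have hyi : bary y i = 1 - (2 ^ n)⁻¹ := by
      rw [ht, eq_sub_iff_add_eq, inv_eq_one_div, ← add_div, div_eq_one_iff_eq hpow]
      exact_mod_cast hti
    have hx' := bary_iterate_sgMap_ptA n hjk
    have hy' := bary_iterate_sgMap_ptA n hik
    refine .inr (.inr ⟨eq_of_bary_eq hjk ?_ ?_, eq_of_bary_eq hik ?_ ?_⟩)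
    · rw [hxj, hx'.1]
    · simp [hs, hsk, hx'.2]
    · rw [hyi, hy'.1]
    · simp [ht, htk, hy'.2]

lemma exists_isCellPair_of_isEdge {n : ℕ} {x y : Pt} (hx : x ∈ Vn n) (hy : y ∈ Vn n)
    (h : isEdge n x y) : ∃ p, IsCellPair n x p ∧ IsCellPair n p y := by
  induction n generalizing x y with
  | zero =>
    obtain ⟨i, rfl⟩ := mem_Vn_zero.1 hx
    obtain ⟨j, rfl⟩ := mem_Vn_zero.1 hy
    exact ⟨ptA i, .zero i i, .zero i j⟩
  | succ n ih =>
    have same_piece (i : Fin 3) {x y : Pt} (hx : x ∈ Vn n) (hy : y ∈ Vn n)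
        (h : isEdge (n + 1) (sgMap i x) (sgMap i y)) :
        ∃ p, IsCellPair (n + 1) (sgMap i x) p ∧ IsCellPair (n + 1) p (sgMap i y) := by
      obtain ⟨p, hxp, hpy⟩ := ih hx hy ((isEdge_sgMap i).1 h)
      exact ⟨_, hxp.succ i, hpy.succ i⟩
    obtain ⟨i, x, hx', rfl⟩ := mem_Vn_succ.1 hx
    obtain ⟨j, y, hy', rfl⟩ := mem_Vn_succ.1 hy
    obtain rfl | hij := eq_or_ne i j
    · exact same_piece i hx' hy' h
    obtain ⟨k, hik, hjk⟩ := exists_ne_and_ne i j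
    rcases eq_ptA_or_eq_iterate_of_isEdge hij hik hjk hx' hy' h with rfl | rfl | ⟨rfl, rfl⟩
    · rw [sgMap_ptA_comm] at h ⊢
      exact same_piece j (ptA_mem_Vn n i) hy' h
    · rw [sgMap_ptA_comm j] at h ⊢
      exact same_piece i hx' (ptA_mem_Vn n j) h
    · refine ⟨sgMap i (ptA j), (isCellPair_ptA_iterate n j k).symm.succ i, ?_⟩
      rw [sgMap_ptA_comm]
      exact (isCellPair_ptA_iterate n i k).succ j

/-- The graph energy of the values `a`, `b`, `c` at the vertices of a triangle. -/
def triangleEnergy (a b c : ℝ) : ℝ := (a - b) ^ 2 + (b - c) ^ 2 + (c - a) ^ 2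

lemma triangleEnergy_nonneg (a b c : ℝ) : 0 ≤ triangleEnergy a b c := by
  unfold triangleEnergy; positivity

lemma triangleEnergy_rotate (a b c : ℝ) : triangleEnergy b c a = triangleEnergy a b c := by
  unfold triangleEnergy; ring

lemma triangleEnergy_add_le (a b c x y z : ℝ) :
    triangleEnergy (a + x) (b + y) (c + z) ≤
      4 / 3 * triangleEnergy a b c + 4 * triangleEnergy x y z := by
  unfold triangleEnergy
  linarith [sq_nonneg (a - b - 3 * (x - y)), sq_nonneg (b - c - 3 * (y - z)),
    sq_nonneg (c - a - 3 * (z - x))]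

/-- The renormalised energy of a triangle with vertex values `a`, `b`, `c` subdivided once, where
`x`, `y`, `z` are the values at the midpoints of the sides `ab`, `bc`, `ca`. -/
def subdividedEnergy (a b c x y z : ℝ) : ℝ :=
  5 / 3 * (triangleEnergy a x z + triangleEnergy b y x + triangleEnergy c z y)

lemma subdividedEnergy_rotate (a b c x y z : ℝ) :
    subdividedEnergy b c a y z x = subdividedEnergy a b c x y z := by
  unfold subdividedEnergy; ring

/-- The value, at the midpoint of the side `ab`, of the harmonic extension of the vertex values `a`,
`b`, `c`. -/
def harmonicMidpoint (a b c : ℝ) : ℝ := (2 * a + 2 * b + c) / 5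

/-- The cross terms vanish: harmonic extension is orthogonal to what vanishes at the vertices. -/
lemma subdividedEnergy_eq (a b c x y z : ℝ) :
    subdividedEnergy a b c x y z = triangleEnergy a b c +
      subdividedEnergy 0 0 0 (x - harmonicMidpoint a b c) (y - harmonicMidpoint b c a)
        (z - harmonicMidpoint c a b) := by
  unfold subdividedEnergy harmonicMidpoint triangleEnergy; ring

lemma triangleEnergy_le_subdividedEnergy (a b c x y z : ℝ) :
    triangleEnergy a b c ≤ subdividedEnergy a b c x y z := by
  rw [subdividedEnergy_eq a b c x y z, le_add_iff_nonneg_right]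
  unfold subdividedEnergy triangleEnergy
  positivity

lemma triangleEnergy_harmonicMidpoint_le (a b c : ℝ) :
    5 / 3 * triangleEnergy a (harmonicMidpoint a b c) (harmonicMidpoint c a b) ≤
      3 / 5 * triangleEnergy a b c := by
  unfold triangleEnergy harmonicMidpoint
  linarith [sq_nonneg (b - c)]

lemma triangleEnergy_child_le (a b c x y z : ℝ) :
    5 / 3 * triangleEnergy a x z ≤ 4 / 5 * triangleEnergy a b c +
      4 * (subdividedEnergy a b c x y z - triangleEnergy a b c) := by
  set X := x - harmonicMidpoint a b c
  set Y := y - harmonicMidpoint b c a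
  set Z := z - harmonicMidpoint c a b
  have hperturb : triangleEnergy a x z ≤
      4 / 3 * triangleEnergy a (harmonicMidpoint a b c) (harmonicMidpoint c a b) +
        4 * triangleEnergy 0 X Z := by
    simpa [X, Z] using
      triangleEnergy_add_le a (harmonicMidpoint a b c) (harmonicMidpoint c a b) 0 X Z
  have hdefect : 5 / 3 * triangleEnergy 0 X Z ≤
      subdividedEnergy a b c x y z - triangleEnergy a b c := by
    rw [subdividedEnergy_eq, add_sub_cancel_left, subdividedEnergy]
    linarith [triangleEnergy_nonneg 0 Y X, triangleEnergy_nonneg 0 Z Y]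
  linarith [triangleEnergy_harmonicMidpoint_le a b c]

/-- The sum of `(5/3)ⁿ (u x - u y)²` over the sides `{x, y}` of all cells of level `n`. Unlike
`energy n u`, it omits the pairs at distance `2⁻ⁿ` that lie across a hole of the gasket. -/
def cellEnergy : ℕ → (Pt → ℝ) → ℝ
  | 0, u => triangleEnergy (u (ptA 0)) (u (ptA 1)) (u (ptA 2))
  | n + 1, u => 5 / 3 * ∑ i, cellEnergy n (u ∘ sgMap i)

lemma cellEnergy_succ (n : ℕ) (u : Pt → ℝ) :
    cellEnergy (n + 1) u = 5 / 3 * ∑ i, cellEnergy n (u ∘ sgMap i) := rfl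

/-- The largest renormalised energy `(5/3)ⁿ T` of a single cell of level `n`, where `T` is the
`triangleEnergy` of the values of `u` at its vertices. -/
def maxCellEnergy : ℕ → (Pt → ℝ) → ℝ
  | 0, u => triangleEnergy (u (ptA 0)) (u (ptA 1)) (u (ptA 2))
  | n + 1, u => 5 / 3 * ⨆ i, maxCellEnergy n (u ∘ sgMap i)

lemma maxCellEnergy_comp_le (n : ℕ) (u : Pt → ℝ) (i : Fin 3) :
    5 / 3 * maxCellEnergy n (u ∘ sgMap i) ≤ maxCellEnergy (n + 1) u :=
  mul_le_mul_of_nonneg_left (le_ciSup (f := fun i => maxCellEnergy n (u ∘ sgMap i))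
    (Set.finite_range _).bddAbove i) (by norm_num)

lemma maxCellEnergy_succ_le_iff {n : ℕ} {u : Pt → ℝ} {r : ℝ} :
    maxCellEnergy (n + 1) u ≤ r ↔ ∀ i, 5 / 3 * maxCellEnergy n (u ∘ sgMap i) ≤ r := by
  refine ⟨fun h i => (maxCellEnergy_comp_le n u i).trans h, fun h => ?_⟩
  obtain ⟨i, hi⟩ := exists_eq_ciSup_of_finite (f := fun i => maxCellEnergy n (u ∘ sgMap i))
  rw [maxCellEnergy, ← hi]
  exact h i

lemma maxCellEnergy_nonneg (n : ℕ) (u : Pt → ℝ) : 0 ≤ maxCellEnergy n u := by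
  induction n generalizing u with
  | zero => exact triangleEnergy_nonneg _ _ _
  | succ n ih => exact mul_nonneg (by norm_num) (Real.iSup_nonneg fun i => ih _)

lemma cellEnergy_one (u : Pt → ℝ) : cellEnergy 1 u =
    subdividedEnergy (u (ptA 0)) (u (ptA 1)) (u (ptA 2)) (u (sgMap 0 (ptA 1))) (u (sgMap 1 (ptA 2)))
      (u (sgMap 2 (ptA 0))) := by
  simp only [cellEnergy, subdividedEnergy, Fin.sum_univ_three, Function.comp_apply, sgMap_ptA_self,
    sgMap_ptA_comm 1 0, sgMap_ptA_comm 2 1, sgMap_ptA_comm 0 2, triangleEnergy]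
  ring

lemma cellEnergy_le_succ (n : ℕ) (u : Pt → ℝ) : cellEnergy n u ≤ cellEnergy (n + 1) u := by
  induction n generalizing u with
  | zero =>
    rw [zero_add, cellEnergy_one]
    exact triangleEnergy_le_subdividedEnergy ..
  | succ n ih =>
    rw [cellEnergy_succ n, cellEnergy_succ (n + 1)]
    gcongr
    exact ih _

lemma maxCellEnergy_one_le (u : Pt → ℝ) :
    maxCellEnergy 1 u ≤ 4 / 5 * maxCellEnergy 0 u + 4 * (cellEnergy 1 u - cellEnergy 0 u) := by
  refine maxCellEnergy_succ_le_iff.2 fun i => ?_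
  rw [cellEnergy_one]
  simp only [cellEnergy, maxCellEnergy, Function.comp_apply]
  set a := u (ptA 0)
  set b := u (ptA 1)
  set c := u (ptA 2)
  set x := u (sgMap 0 (ptA 1)) with hx
  set y := u (sgMap 1 (ptA 2)) with hy
  set z := u (sgMap 2 (ptA 0)) with hz
  fin_cases i
  · simpa only [Fin.zero_eta, sgMap_ptA_self, sgMap_ptA_comm 0 2, ← hx, ← hz]
      using triangleEnergy_child_le a b c x y z
  · simpa only [Fin.mk_one, sgMap_ptA_self, sgMap_ptA_comm 1 0, ← hx, ← hy,
      triangleEnergy_rotate x, triangleEnergy_rotate a, subdividedEnergy_rotate a]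
      using triangleEnergy_child_le b c a y z x
  · simpa only [Fin.reduceFinMk, sgMap_ptA_self, sgMap_ptA_comm 2 1, ← hy, ← hz,
      ← triangleEnergy_rotate z, ← triangleEnergy_rotate c, ← subdividedEnergy_rotate c]
      using triangleEnergy_child_le c a b z x y

lemma maxCellEnergy_succ_le (n : ℕ) (u : Pt → ℝ) : maxCellEnergy (n + 1) u ≤
    4 / 5 * maxCellEnergy n u + 4 * (cellEnergy (n + 1) u - cellEnergy n u) := by
  induction n generalizing u with
  | zero => exact maxCellEnergy_one_le u
  | succ n ih =>
    refine maxCellEnergy_succ_le_iff.2 fun i => ?_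
    let defect (j : Fin 3) : ℝ := cellEnergy (n + 1) (u ∘ sgMap j) - cellEnergy n (u ∘ sgMap j)
    have hdefect : defect i ≤ ∑ j, defect j := Finset.single_le_sum
      (fun j _ => sub_nonneg.2 (cellEnergy_le_succ n (u ∘ sgMap j))) (Finset.mem_univ i)
    rw [cellEnergy_succ (n + 1), cellEnergy_succ n, ← mul_sub, ← Finset.sum_sub_distrib]
    linarith [ih (u ∘ sgMap i), maxCellEnergy_comp_le n u i]

lemma IsCellPair.sq_sub_le_maxCellEnergy {n : ℕ} {x y : Pt} (h : IsCellPair n x y) (u : Pt → ℝ) :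
    (5 / 3) ^ n * (u x - u y) ^ 2 ≤ maxCellEnergy n u := by
  induction h generalizing u with
  | zero i j =>
    simp only [maxCellEnergy, triangleEnergy, pow_zero, one_mul]
    have h01 := sq_nonneg (u (ptA 0) - u (ptA 1))
    have h12 := sq_nonneg (u (ptA 1) - u (ptA 2))
    have h20 := sq_nonneg (u (ptA 2) - u (ptA 0))
    fin_cases i <;> fin_cases j <;>
      simp only [Fin.zero_eta, Fin.mk_one, Fin.reduceFinMk] <;> linarith
  | @succ n x y i _ ih =>
    calc (5 / 3) ^ (n + 1) * (u (sgMap i x) - u (sgMap i y)) ^ 2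
        = 5 / 3 * ((5 / 3) ^ n * ((u ∘ sgMap i) x - (u ∘ sgMap i) y) ^ 2) := by
          rw [pow_succ', mul_assoc]; rfl
      _ ≤ 5 / 3 * maxCellEnergy n (u ∘ sgMap i) := by gcongr; exact ih _
      _ ≤ maxCellEnergy (n + 1) u := maxCellEnergy_comp_le n u i

/-- The ordered pairs `(x, y)` of neighbours in the graph `Γₙ`. -/
def dirEdges (n : ℕ) : Finset (Pt × Pt) := {e ∈ Vn n ×ˢ Vn n | isEdge n e.1 e.2}

lemma energy_eq_sum_dirEdges (n : ℕ) (u : Pt → ℝ) :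
    energy n u = (5 / 3) ^ n * (1 / 2) * ∑ e ∈ dirEdges n, (u e.2 - u e.1) ^ 2 := by
  simp only [energy, energyBi, dirEdges, Finset.sum_filter, Finset.sum_product, sq]

lemma isEdge_ptA {i j : Fin 3} : isEdge 0 (ptA i) (ptA j) ↔ i ≠ j := by
  rw [isEdge_iff_sum_sq]
  fin_cases i <;> fin_cases j <;> simp [bary_ptA, Fin.sum_univ_three, one_add_one_eq_two]

lemma cellEnergy_zero_eq_energy (u : Pt → ℝ) : cellEnergy 0 u = energy 0 u := by
  have hV : Vn 0 = Finset.univ.image ptA := by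
    ext x; simp [mem_Vn_zero, eq_comm]
  rw [energy, energyBi, hV]
  simp only [Finset.sum_image ptA_injective.injOn, isEdge_ptA, Fin.sum_univ_three, cellEnergy,
    triangleEnergy, pow_zero, ne_eq, Fin.reduceEq, not_true_eq_false, not_false_eq_true, if_true,
    if_false]
  ring

lemma injOn_sgMap_dirEdges (n : ℕ) :
    Set.InjOn (fun p : Fin 3 × (Pt × Pt) => (sgMap p.1 p.2.1, sgMap p.1 p.2.2))
      ((Finset.univ ×ˢ dirEdges n : Finset (Fin 3 × (Pt × Pt))) : Set (Fin 3 × (Pt × Pt))) := by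
  rintro ⟨i, x, y⟩ he ⟨j, x', y'⟩ he' h
  simp only [Finset.coe_product, dirEdges, Finset.coe_filter, Finset.coe_univ, Set.mem_prod,
    Set.mem_univ, true_and, Set.mem_ofPred_eq, Finset.mem_product, Prod.mk.injEq] at he he' h
  obtain ⟨⟨hx, hy⟩, hxy⟩ := he
  obtain rfl | hij := eq_or_ne i j
  · rw [sgMap_injective i h.1, sgMap_injective i h.2]
  · exact absurd ((eq_ptA_of_sgMap_eq hij hx he'.1.1 h.1).trans
      (eq_ptA_of_sgMap_eq hij hy he'.1.2 h.2).symm) hxy.ne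

lemma sum_energy_comp_sgMap_le (n : ℕ) (u : Pt → ℝ) :
    5 / 3 * ∑ i, energy n (u ∘ sgMap i) ≤ energy (n + 1) u := by
  have hsub : (Finset.univ ×ˢ dirEdges n).image
      (fun p : Fin 3 × (Pt × Pt) => (sgMap p.1 p.2.1, sgMap p.1 p.2.2)) ⊆ dirEdges (n + 1) := by
    simp only [Finset.image_subset_iff, dirEdges, Finset.mem_product, Finset.mem_filter,
      Finset.mem_univ, true_and]
    rintro ⟨i, x, y⟩ ⟨⟨hx, hy⟩, hxy⟩
    exact ⟨⟨mem_Vn_succ.2 ⟨i, x, hx, rfl⟩, mem_Vn_succ.2 ⟨i, y, hy, rfl⟩⟩, (isEdge_sgMap i).2 hxy⟩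
  have hsum : ∑ i, ∑ e ∈ dirEdges n, (u (sgMap i e.2) - u (sgMap i e.1)) ^ 2 ≤
      ∑ e ∈ dirEdges (n + 1), (u e.2 - u e.1) ^ 2 := by
    rw [← Finset.sum_product', ← Finset.sum_image (f := fun e : Pt × Pt => (u e.2 - u e.1) ^ 2)
      (injOn_sgMap_dirEdges n)]
    exact Finset.sum_le_sum_of_subset_of_nonneg hsub fun _ _ _ => sq_nonneg _
  simp only [energy_eq_sum_dirEdges, Function.comp_apply, ← Finset.mul_sum,
    pow_succ (5 / 3 : ℝ) n]
  have hpow : (0 : ℝ) ≤ 5 / 3 * ((5 / 3) ^ n * (1 / 2)) := by positivity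
  linarith [mul_le_mul_of_nonneg_left hsum hpow]

lemma cellEnergy_le_energy (n : ℕ) (u : Pt → ℝ) : cellEnergy n u ≤ energy n u := by
  induction n generalizing u with
  | zero => exact (cellEnergy_zero_eq_energy u).le
  | succ n ih =>
    refine le_trans ?_ (sum_energy_comp_sgMap_le n u)
    rw [cellEnergy_succ]
    gcongr
    exact ih _

lemma tendsto_maxCellEnergy {u : Pt → ℝ} (hu : FiniteEnergy u) :
    Tendsto (fun n => maxCellEnergy n u) atTop (𝓝 0) := by
  obtain ⟨B, hB⟩ := hu
  have hbdd : BddAbove (Set.range fun n => 4 * cellEnergy n u) := by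
    refine ⟨4 * B, Set.forall_mem_range.2 fun n => ?_⟩
    gcongr
    exact (cellEnergy_le_energy n u).trans (hB ⟨n, rfl⟩)
  refine (summable_of_succ_le_mul_add_sub (r := 4 / 5) (fun n => maxCellEnergy_nonneg n u)
    (by norm_num) hbdd fun n => ?_).tendsto_atTop_zero
  rw [← mul_sub]
  exact maxCellEnergy_succ_le n u

lemma sq_sub_le_of_isEdge {n : ℕ} {x y : Pt} (hx : x ∈ Vn n) (hy : y ∈ Vn n) (h : isEdge n x y)
    (u : Pt → ℝ) : (5 / 3) ^ n * (u y - u x) ^ 2 ≤ 4 * maxCellEnergy n u := by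
  obtain ⟨p, hxp, hpy⟩ := exists_isCellPair_of_isEdge hx hy h
  calc (5 / 3) ^ n * (u y - u x) ^ 2
      ≤ (5 / 3) ^ n * (2 * ((u x - u p) ^ 2 + (u p - u y) ^ 2)) := by
        gcongr
        linarith [sq_nonneg (u x - u p - (u p - u y))]
    _ = 2 * ((5 / 3) ^ n * (u x - u p) ^ 2 + (5 / 3) ^ n * (u p - u y) ^ 2) := by ring
    _ ≤ 4 * maxCellEnergy n u := by
        linarith [hxp.sq_sub_le_maxCellEnergy u, hpy.sq_sub_le_maxCellEnergy u]

lemma card_neighbours_le {n : ℕ} {x : Pt} (hx : x ∈ Vn n) :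
    ((Vn n).filter (isEdge n x)).card ≤ 9 := by
  let D : Finset ℝ := (Finset.Icc (-1 : ℤ) 1).image (fun d : ℤ => (d : ℝ))
  have hD {y : Pt} (hy : y ∈ Vn n) (h : isEdge n x y) (k : Fin 3) :
      2 ^ n * (bary x k - bary y k) ∈ D := by
    obtain ⟨s, -, hs⟩ := exists_bary_eq_div hx
    obtain ⟨t, -, ht⟩ := exists_bary_eq_div hy
    have hdiff : 2 ^ n * (bary x k - bary y k) = (s k - t k : ℤ) := by
      rw [hs, ht]; push_cast; field_simp
    have hsq : (2 ^ n * (bary x k - bary y k)) ^ 2 ≤ 2 :=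
      (Finset.single_le_sum (f := fun k => (2 ^ n * (bary x k - bary y k)) ^ 2)
        (fun _ _ => sq_nonneg _) (Finset.mem_univ k)).trans (isEdge_iff_sum_sq.1 h).le
    rw [hdiff] at hsq ⊢
    exact Finset.mem_image_of_mem _ (Finset.mem_Icc.2 (abs_le.1 (abs_le_one_of_sq_le_two
      (by exact_mod_cast hsq))))
  have hD_card : D.card ≤ 3 := Finset.card_image_le
  have hcard : (D ×ˢ D).card ≤ 9 :=
    (Finset.card_product D D).trans_le (Nat.mul_le_mul hD_card hD_card)
  refine (Finset.card_le_card_of_injOn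
    (fun y => (2 ^ n * (bary x 0 - bary y 0), 2 ^ n * (bary x 1 - bary y 1))) ?_ ?_).trans hcard
  · intro y hy
    obtain ⟨hy, hxy⟩ := Finset.mem_filter.1 hy
    exact Finset.mem_product.2 ⟨hD hy hxy 0, hD hy hxy 1⟩
  · intro y _ z _ h
    simp only [Prod.mk.injEq, mul_eq_mul_left_iff, sub_right_inj, pow_eq_zero_iff',
      false_and, OfNat.ofNat_ne_zero, or_false] at h
    exact eq_of_bary_eq zero_ne_one h.1 h.2

lemma localEnergy_le {n : ℕ} {x : Pt} (hx : x ∈ Vn n) (u : Pt → ℝ) :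
    (5 / 3 : ℝ) ^ n * (∑ y ∈ Vn n, if isEdge n x y then (u y - u x) ^ 2 else 0) ≤
      36 * maxCellEnergy n u := by
  rw [← Finset.sum_filter, Finset.mul_sum]
  calc _ ≤ ((Vn n).filter (isEdge n x)).card • (4 * maxCellEnergy n u) :=
        Finset.sum_le_card_nsmul _ _ _ fun y hy =>
          sq_sub_le_of_isEdge hx (Finset.mem_filter.1 hy).1 (Finset.mem_filter.1 hy).2 u
    _ ≤ 9 • (4 * maxCellEnergy n u) :=
        nsmul_le_nsmul_left (mul_nonneg (by norm_num) (maxCellEnergy_nonneg n u))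
          (card_neighbours_le hx)
    _ = 36 * maxCellEnergy n u := by rw [nsmul_eq_mul]; push_cast; ring

/-- If `f : V* → ℝ` has finite energy, then the pointwise local energies
`(5/3)ⁿ Σ_{y:{x,y}∈Eₙ} (f(y)−f(x))²` vanish uniformly over `x ∈ Vₙ` as `n → ∞`. -/
theorem statement10 (u : Pt → ℝ) (hu : FiniteEnergy u) :
    ∀ ε : ℝ, 0 < ε → ∃ N : ℕ, ∀ n : ℕ, N ≤ n → ∀ x ∈ Vn n,
      (5 / 3 : ℝ) ^ n * (∑ y ∈ Vn n, if isEdge n x y then (u y - u x) ^ 2 else 0) < ε := by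
  intro ε hε
  have hlim : Tendsto (fun n => 36 * maxCellEnergy n u) atTop (𝓝 0) := by
    simpa using (tendsto_maxCellEnergy hu).const_mul 36
  obtain ⟨N, hN⟩ := eventually_atTop.1 (hlim.eventually_lt_const hε)
  exact ⟨N, fun n hn x hx => (localEnergy_le hx u).trans_lt (hN n hn)⟩

end
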